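/- Let m, n be positive integers and p_1, ..., p_m ∈ [2, ∞]. Then every unimodular m-linear form A : ℓ_{p_1}^n × ⋯ × ℓ_{p_m}^n → 𝕂 (i.e., every m-linear form all of whose coefficients A(e_{j_1},...,e_{j_m}) have modulus 1) satisfies ‖A‖ ≥ (1/√2)^{m−1} · n^{1/2 + (1/2 − 1/p_1) + ⋯ + (1/2 − 1/p_m)} (with the convention 1/∞ = 0). -/

import Mathlib

open scoped BigOperators ENNReal

noncomputable section

/-- The `ℓ_p` norm on `𝕂^n`, for `p ∈ [1, ∞]` (sup norm when `p = ∞`). -/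
def lpNorm {𝕂 : Type*} [RCLike 𝕂] (p : ℝ≥0∞) {n : ℕ} (x : Fin n → 𝕂) : ℝ :=
  if p = ∞ then ⨆ j, ‖x j‖ else (∑ j, ‖x j‖ ^ p.toReal) ^ (1 / p.toReal)

/-- The operator norm of an `m`-linear form `A : ℓ_{p 1}^{n 1} × ⋯ × ℓ_{p m}^{n m} → 𝕂`,
i.e. the supremum of `‖A x‖` over all `x` with `‖x k‖_{p k} ≤ 1` for every `k`. -/
def opNorm {𝕂 : Type*} [RCLike 𝕂] {m : ℕ} {n : Fin m → ℕ} (p : Fin m → ℝ≥0∞)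
    (A : MultilinearMap 𝕂 (fun k => Fin (n k) → 𝕂) 𝕂) : ℝ :=
  sSup {t | ∃ x : ∀ k, Fin (n k) → 𝕂, (∀ k, lpNorm (p k) (x k) ≤ 1) ∧ t = ‖A x‖}

/-- A multilinear form is unimodular if all its coefficients `A (e_{j 1}, …, e_{j m})`
have modulus 1. -/
def Unimodular {𝕂 : Type*} [RCLike 𝕂] {m : ℕ} {n : Fin m → ℕ}
    (A : MultilinearMap 𝕂 (fun k => Fin (n k) → 𝕂) 𝕂) : Prop :=
  ∀ j : ∀ k, Fin (n k), ‖A (fun k => Pi.single (j k) 1)‖ = 1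

/-- The `m`-linear form `z ↦ ∑_j c j • z^{(1)}_{j 1} ⋯ z^{(m)}_{j m}` determined by the
coefficients `c`. -/
def coeffForm {𝕂 : Type*} [RCLike 𝕂] {m : ℕ} {n : Fin m → ℕ} (c : (∀ k, Fin (n k)) → 𝕂) :
    MultilinearMap 𝕂 (fun k => Fin (n k) → 𝕂) 𝕂 :=
  ∑ j : ∀ k, Fin (n k), (MultilinearMap.mkPiRing 𝕂 (Fin m) (c j)).compLinearMap
    fun k => LinearMap.proj (j k)

/-- The conjugate exponent `p*` of `p ∈ [1,∞]`, defined by `1/p + 1/p* = 1`. -/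
def conjExp (p : ℝ≥0∞) : ℝ≥0∞ := (1 - 1/p)⁻¹

/-!
Khintchine's inequality with the sharp constant `1 / √2` holds for Rademacher sums
`S x = ∑ᵢ xᵢ vᵢ` in a Hilbert space, by the argument of Latała and Oleszkiewicz. The function
`f = ‖S‖` on the sign cube is even, so its degree-one Walsh coefficients vanish and the Poincaré
inequality improves to `2 Var f ≤ 𝓔 f`, with `𝓔` the Dirichlet form. On the other hand, flipping one
sign at a time gives `∑ᵢ S xⁱ = (n - 2) S x`, whence `𝓔 f ≤ 𝔼 f²`. Together, `𝔼 f² ≤ 2 (𝔼 f)²`.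

Averaging over signs in all variables of `A` but the `l`-th, one variable at a time, and then
choosing the `l`-th vector to align phases yields vectors `z` with unimodular entries such that
`‖A z‖ ≥ (1 / √2) ^ (m - 1) ∑ᵢ (∑ⱼ |a_{ij}|²) ^ (1 / 2)`, with `i` the index in the `l`-th variable
and `j` the remaining ones: the mixed `(ℓ₁, ℓ₂)`-Littlewood inequality. For a unimodular form the
double sum is explicit, and `n_k ^ (-1 / p_k) z_k` lies in the unit ball of `ℓ_{p_k}`.
-/

section SignCube

open Finset

variable {n : ℕ}

/-- The sign vector `x ∈ {±1}ⁿ` with its `i`-th coordinate negated. -/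
def flipSign (i : Fin n) (x : Fin n → ℤˣ) : Fin n → ℤˣ := Function.update x i (-x i)

/-- The Dirichlet form (total influence) `∑ᵢ 𝔼 ((f x - f (xⁱ)) / 2)²` of a function on the sign
cube, where `xⁱ` is `x` with the `i`-th sign flipped. The factor `1 / 2` makes it take the
value `1` on each coordinate function. -/
def dirichletForm (f : (Fin n → ℤˣ) → ℝ) : ℝ :=
  ∑ i, 𝔼 x, ((f x - f (flipSign i x)) / 2) ^ 2

/-- The part `g` of `f (±1, y) = g y ± h y` that is even in the first sign. -/
def headEven (f : (Fin (n + 1) → ℤˣ) → ℝ) (y : Fin n → ℤˣ) : ℝ :=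
  (f (Fin.cons 1 y) + f (Fin.cons (-1) y)) / 2

/-- The part `h` of `f (±1, y) = g y ± h y` that is odd in the first sign. -/
def headOdd (f : (Fin (n + 1) → ℤˣ) → ℝ) (y : Fin n → ℤˣ) : ℝ :=
  (f (Fin.cons 1 y) - f (Fin.cons (-1) y)) / 2

lemma flipSign_involutive (i : Fin n) : Function.Involutive (flipSign i) := fun x => by
  simp [flipSign]

lemma flipSign_zero_cons (b : ℤˣ) (y : Fin n → ℤˣ) :
    flipSign 0 (Fin.cons b y : Fin (n + 1) → ℤˣ) = Fin.cons (-b) y := by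
  simp [flipSign]

lemma flipSign_succ_cons (b : ℤˣ) (y : Fin n → ℤˣ) (i : Fin n) :
    flipSign i.succ (Fin.cons b y : Fin (n + 1) → ℤˣ) = Fin.cons b (flipSign i y) := by
  simp [flipSign, Fin.cons_update]

lemma dirichletForm_nonneg (f : (Fin n → ℤˣ) → ℝ) : 0 ≤ dirichletForm f :=
  sum_nonneg fun _ _ => expect_nonneg fun _ _ => sq_nonneg _

lemma expect_eq_expect_headEven (f : (Fin (n + 1) → ℤˣ) → ℝ) : 𝔼 x, f x = 𝔼 y, headEven f y := by
  calc 𝔼 x, f x = 𝔼 q : ℤˣ × (Fin n → ℤˣ), f (Fin.cons q.1 q.2) :=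
        (Fintype.expect_equiv (Fin.consEquiv fun _ => ℤˣ) _ _ fun _ => rfl).symm
    _ = 𝔼 y, 𝔼 b : ℤˣ, f (Fin.cons b y) := by
        rw [← univ_product_univ, expect_product' univ univ fun b y => f (Fin.cons b y), expect_comm]
    _ = 𝔼 y, headEven f y := by
        simp [headEven, UnitsInt.univ, expect_eq_sum_div_card]

lemma expect_sq_eq_expect_headEven_sq_add (f : (Fin (n + 1) → ℤˣ) → ℝ) :
    𝔼 x, f x ^ 2 = 𝔼 y, headEven f y ^ 2 + 𝔼 y, headOdd f y ^ 2 := by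
  rw [expect_eq_expect_headEven, ← expect_add_distrib]
  refine expect_congr rfl fun y _ => ?_
  simp only [headEven, headOdd]
  ring

lemma expect_zero_smul_eq_expect_headOdd (f : (Fin (n + 1) → ℤˣ) → ℝ) :
    𝔼 x, x 0 • f x = 𝔼 y, headOdd f y := by
  rw [expect_eq_expect_headEven]
  simp [headEven, headOdd, sub_eq_add_neg]

lemma expect_succ_smul_eq_expect_smul_headEven (f : (Fin (n + 1) → ℤˣ) → ℝ) (i : Fin n) :
    𝔼 x, x i.succ • f x = 𝔼 y, y i • headEven f y := by
  rw [expect_eq_expect_headEven]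
  refine expect_congr rfl fun y _ => ?_
  simp only [headEven, Fin.cons_succ, ← smul_add, smul_div_assoc]

lemma dirichletForm_eq_expect_headOdd_sq_add (f : (Fin (n + 1) → ℤˣ) → ℝ) :
    dirichletForm f =
      𝔼 y, headOdd f y ^ 2 + (dirichletForm (headEven f) + dirichletForm (headOdd f)) := by
  simp only [dirichletForm, Fin.sum_univ_succ, ← sum_add_distrib, ← expect_add_distrib]
  congr 1
  · rw [expect_eq_expect_headEven]
    refine expect_congr rfl fun y _ => ?_
    simp only [headEven, headOdd, flipSign_zero_cons, neg_neg]
    ring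
  · refine sum_congr rfl fun i _ => ?_
    rw [expect_eq_expect_headEven]
    refine expect_congr rfl fun y _ => ?_
    simp only [headEven, headOdd, flipSign_succ_cons]
    ring

lemma variance_le_dirichletForm (f : (Fin n → ℤˣ) → ℝ) :
    𝔼 x, f x ^ 2 - (𝔼 x, f x) ^ 2 ≤ dirichletForm f := by
  induction n with
  | zero => simp [dirichletForm]
  | succ n ih =>
    rw [expect_sq_eq_expect_headEven_sq_add, expect_eq_expect_headEven f,
      dirichletForm_eq_expect_headOdd_sq_add]
    linarith [ih (headEven f), dirichletForm_nonneg (headOdd f)]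

/- In Walsh expansion, with `W k` the squared weight of the degree-`k` coefficients, this is
`2 ∑_{k ≥ 1} W k - W 1 ≤ ∑ k, k * W k`. -/
lemma two_mul_variance_sub_level_one_le_dirichletForm (f : (Fin n → ℤˣ) → ℝ) :
    2 * (𝔼 x, f x ^ 2 - (𝔼 x, f x) ^ 2) - ∑ i, (𝔼 x, x i • f x) ^ 2 ≤ dirichletForm f := by
  induction n with
  | zero => simp [dirichletForm]
  | succ n ih =>
    rw [expect_sq_eq_expect_headEven_sq_add, expect_eq_expect_headEven f,
      dirichletForm_eq_expect_headOdd_sq_add, Fin.sum_univ_succ, expect_zero_smul_eq_expect_headOdd]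
    simp only [expect_succ_smul_eq_expect_smul_headEven]
    linarith [ih (headEven f), variance_le_dirichletForm (headOdd f)]

lemma dirichletForm_eq_expect_mul_sum_sub (f : (Fin n → ℤˣ) → ℝ) :
    dirichletForm f = 𝔼 x, f x * (∑ i, (f x - f (flipSign i x))) / 2 := by
  simp only [mul_sum, sum_div, dirichletForm, expect_sum_comm]
  refine sum_congr rfl fun i _ => ?_
  have expect_sq_flipSign : 𝔼 x, f (flipSign i x) ^ 2 = 𝔼 x, f x ^ 2 :=
    Fintype.expect_equiv (flipSign_involutive i).toPerm _ _ fun _ => rfl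
  calc 𝔼 x, ((f x - f (flipSign i x)) / 2) ^ 2
      = 𝔼 x, (f x * (f x - f (flipSign i x)) / 2 + (f (flipSign i x) ^ 2 / 4 - f x ^ 2 / 4)) :=
        expect_congr rfl fun x _ => by ring
    _ = 𝔼 x, f x * (f x - f (flipSign i x)) / 2 := by
        simp only [expect_add_distrib, expect_sub_distrib, ← expect_div, expect_sq_flipSign,
          sub_self, add_zero]

lemma expect_smul_eq_zero_of_even {f : (Fin n → ℤˣ) → ℝ} (hf : ∀ x, f (-x) = f x) (i : Fin n) :
    𝔼 x, x i • f x = 0 := by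
  have antisymm : 𝔼 x, x i • f x = -𝔼 x, x i • f x := by
    rw [← expect_neg_distrib]
    exact Fintype.expect_equiv (Equiv.neg _) _ _ fun x => by simp [hf]
  linarith

end SignCube

section KahaneKhintchine

open Finset

variable {n : ℕ} {V : Type*}

/-- The Rademacher sum `∑ᵢ xᵢ vᵢ` of the vectors `v` with signs `x`. -/
def signedSum [AddCommGroup V] (v : Fin n → V) (x : Fin n → ℤˣ) : V := ∑ i, x i • v i

lemma signedSum_neg [AddCommGroup V] (v : Fin n → V) (x : Fin n → ℤˣ) :
    signedSum v (-x) = -signedSum v x := by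
  simp [signedSum]

lemma signedSum_cons [AddCommGroup V] (v : Fin (n + 1) → V) (b : ℤˣ) (y : Fin n → ℤˣ) :
    signedSum v (Fin.cons b y) = b • v 0 + signedSum (Fin.tail v) y := by
  simp [signedSum, Fin.sum_univ_succ, Fin.tail]

lemma signedSum_flipSign_add [AddCommGroup V] (v : Fin n → V) (x : Fin n → ℤˣ) (i : Fin n) :
    signedSum v (flipSign i x) + 2 • x i • v i = signedSum v x := by
  have smul_eq_off_diagonal : ∀ j ∈ univ.erase i, flipSign i x j • v j = x j • v j :=
    fun j hj => by rw [flipSign, Function.update_of_ne (ne_of_mem_erase hj)]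
  simp only [signedSum, ← add_sum_erase univ _ (mem_univ i), sum_congr rfl smul_eq_off_diagonal]
  simp only [flipSign, Function.update_self, Units.neg_smul]
  abel

lemma sum_norm_sub_norm_flipSign_le (𝕜 : Type*) [RCLike 𝕜] [NormedAddCommGroup V]
    [NormedSpace 𝕜 V] (v : Fin n → V) (x : Fin n → ℤˣ) :
    ∑ i, (‖signedSum v x‖ - ‖signedSum v (flipSign i x)‖) ≤ 2 * ‖signedSum v x‖ := by
  have smul_eq_sum_flip :
      n • signedSum v x = ∑ i, signedSum v (flipSign i x) + 2 • signedSum v x := by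
    calc n • signedSum v x = ∑ i, (signedSum v (flipSign i x) + 2 • x i • v i) := by
          simp [signedSum_flipSign_add]
      _ = ∑ i, signedSum v (flipSign i x) + 2 • signedSum v x := by
          rw [sum_add_distrib, ← smul_sum, ← signedSum]
  have mul_norm_le :
      n * ‖signedSum v x‖ ≤ ∑ i, ‖signedSum v (flipSign i x)‖ + 2 * ‖signedSum v x‖ := by
    calc n * ‖signedSum v x‖ = ‖n • signedSum v x‖ := by
          rw [RCLike.norm_nsmul 𝕜, nsmul_eq_mul]
      _ ≤ ‖∑ i, signedSum v (flipSign i x)‖ + ‖2 • signedSum v x‖ := by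
          rw [smul_eq_sum_flip]
          exact norm_add_le _ _
      _ ≤ ∑ i, ‖signedSum v (flipSign i x)‖ + 2 * ‖signedSum v x‖ := by
          rw [RCLike.norm_nsmul 𝕜 2, nsmul_eq_mul, Nat.cast_ofNat]
          gcongr
          exact norm_sum_le _ _
  simpa [sum_sub_distrib, add_comm] using mul_norm_le

lemma dirichletForm_norm_signedSum_le (𝕜 : Type*) [RCLike 𝕜] [NormedAddCommGroup V]
    [NormedSpace 𝕜 V] (v : Fin n → V) :
    dirichletForm (fun x => ‖signedSum v x‖) ≤ 𝔼 x, ‖signedSum v x‖ ^ 2 := by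
  rw [dirichletForm_eq_expect_mul_sum_sub]
  refine expect_le_expect fun x _ => ?_
  linarith [mul_le_mul_of_nonneg_left (sum_norm_sub_norm_flipSign_le 𝕜 v x)
    (norm_nonneg (signedSum v x))]

lemma expect_norm_sq_signedSum_le (𝕜 : Type*) [RCLike 𝕜] [NormedAddCommGroup V]
    [NormedSpace 𝕜 V] (v : Fin n → V) :
    𝔼 x, ‖signedSum v x‖ ^ 2 ≤ 2 * (𝔼 x, ‖signedSum v x‖) ^ 2 := by
  have level_one_eq_zero (i : Fin n) : 𝔼 x, x i • ‖signedSum v x‖ = 0 :=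
    expect_smul_eq_zero_of_even (fun x => by rw [signedSum_neg, norm_neg]) i
  have poincare := two_mul_variance_sub_level_one_le_dirichletForm fun x => ‖signedSum v x‖
  simp only [level_one_eq_zero, zero_pow two_ne_zero, sum_const_zero, sub_zero] at poincare
  linarith [dirichletForm_norm_signedSum_le 𝕜 v]

lemma expect_norm_sq_signedSum (𝕜 : Type*) [RCLike 𝕜] [NormedAddCommGroup V]
    [InnerProductSpace 𝕜 V] (v : Fin n → V) :
    𝔼 x, ‖signedSum v x‖ ^ 2 = ∑ i, ‖v i‖ ^ 2 := by
  induction n with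
  | zero => simp [signedSum]
  | succ n ih =>
    have parallelogram (y : Fin n → ℤˣ) :
        headEven (fun x => ‖signedSum v x‖ ^ 2) y = ‖v 0‖ ^ 2 + ‖signedSum (Fin.tail v) y‖ ^ 2 := by
      simp only [headEven, signedSum_cons, one_smul, Units.neg_smul, neg_add_eq_sub,
        norm_sub_rev _ (v 0)]
      linarith [parallelogram_law_with_norm 𝕜 (v 0) (signedSum (Fin.tail v) y)]
    rw [expect_eq_expect_headEven, Fin.sum_univ_succ]
    simp only [parallelogram, expect_add_distrib, Fintype.expect_const, ih, Fin.tail]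

lemma sqrt_sum_norm_sq_le_expect_norm_signedSum (𝕜 : Type*) [RCLike 𝕜] [NormedAddCommGroup V]
    [InnerProductSpace 𝕜 V] (v : Fin n → V) :
    1 / √2 * √(∑ i, ‖v i‖ ^ 2) ≤ 𝔼 x, ‖signedSum v x‖ := by
  have expect_norm_nonneg : 0 ≤ 𝔼 x, ‖signedSum v x‖ := expect_nonneg fun _ _ => norm_nonneg _
  rw [← expect_norm_sq_signedSum 𝕜, one_div_mul_eq_div, div_le_iff₀ (by positivity)]
  refine Real.sqrt_le_iff.2 ⟨mul_nonneg expect_norm_nonneg (Real.sqrt_nonneg _), ?_⟩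
  rw [mul_pow, Real.sq_sqrt zero_le_two, mul_comm]
  exact expect_norm_sq_signedSum_le 𝕜 v

end KahaneKhintchine

section MixedLittlewood

open Finset

variable {𝕂 : Type*} [RCLike 𝕂] {m : ℕ}

/-- The family of coefficients `A (e_{j 1}, …, e_{j m})` of an `m`-linear form as a vector, so that
its norm is the Hilbert–Schmidt norm of `A`. -/
def coeffVec {n : Fin m → ℕ} :
    MultilinearMap 𝕂 (fun k => Fin (n k) → 𝕂) 𝕂 →ₗ[𝕂] EuclideanSpace 𝕂 (∀ k, Fin (n k)) where
  toFun A := WithLp.toLp 2 fun j => A fun k => Pi.single (j k) 1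
  map_add' _ _ := rfl
  map_smul' _ _ := rfl

@[simp]
lemma coeffVec_apply {n : Fin m → ℕ} (A : MultilinearMap 𝕂 (fun k => Fin (n k) → 𝕂) 𝕂)
    (j : ∀ k, Fin (n k)) : coeffVec A j = A fun k => Pi.single (j k) 1 := rfl

lemma norm_coeffVec_of_unimodular {n : Fin m → ℕ}
    {A : MultilinearMap 𝕂 (fun k => Fin (n k) → 𝕂) 𝕂} (hA : Unimodular A) :
    ‖coeffVec A‖ = √(∏ k, (n k : ℝ)) := by
  simp [EuclideanSpace.norm_eq, hA _]

variable {n : Fin (m + 1) → ℕ} (A : MultilinearMap 𝕂 (fun k => Fin (n k) → 𝕂) 𝕂)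
  (l : Fin (m + 1))

lemma curryMid_single_apply_single (i : Fin (n l)) (j : ∀ k, Fin (n (l.succAbove k))) :
    A.curryMid l (Pi.single i 1) (fun k => Pi.single (j k) 1) =
      A fun k => Pi.single (l.insertNth (α := fun k => Fin (n k)) i j k) 1 := by
  rw [MultilinearMap.curryMid_apply_apply]
  congr 1
  exact Fin.insertNth_eq_iff.2 ⟨by simp, funext fun k => by simp [Fin.removeNth]⟩

lemma unimodular_curryMid_single {A : MultilinearMap 𝕂 (fun k => Fin (n k) → 𝕂) 𝕂}
    (hA : Unimodular A) (i : Fin (n l)) : Unimodular (A.curryMid l (Pi.single i 1)) := fun j => by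
  rw [curryMid_single_apply_single]
  exact hA _

lemma sum_norm_coeffVec_curryMid_single_of_unimodular
    {A : MultilinearMap 𝕂 (fun k => Fin (n k) → 𝕂) 𝕂} (hA : Unimodular A) :
    ∑ i, ‖coeffVec (A.curryMid l (Pi.single i 1))‖ = √(n l) * ∏ k, √(n k : ℝ) := by
  calc ∑ i, ‖coeffVec (A.curryMid l (Pi.single i 1))‖
      = n l * √(∏ k, (n (l.succAbove k) : ℝ)) := by
        simp [norm_coeffVec_of_unimodular (unimodular_curryMid_single l hA _)]
    _ = √(n l) * ∏ k, √(n k : ℝ) := by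
        rw [Fin.prod_univ_succAbove _ l, ← mul_assoc, Real.mul_self_sqrt (Nat.cast_nonneg _),
          Real.sqrt_prod _ fun _ _ => Nat.cast_nonneg _]

lemma curryMid_eq_sum_smul (x : Fin (n l) → 𝕂) :
    A.curryMid l x = ∑ i, x i • A.curryMid l (Pi.single i 1) := by
  conv_lhs => rw [pi_eq_sum_univ' x, map_sum]
  simp only [map_smul]

lemma sum_norm_sq_coeffVec_curryMid_single :
    ∑ i, ‖coeffVec (A.curryMid l (Pi.single i 1))‖ ^ 2 = ‖coeffVec A‖ ^ 2 := by
  simp only [EuclideanSpace.norm_sq_eq]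
  rw [← (Fin.insertNthEquiv (fun k => Fin (n k)) l).sum_comp, Fintype.sum_prod_type]
  simp only [coeffVec_apply, curryMid_single_apply_single, Fin.insertNthEquiv_apply]

lemma norm_coeffVec_le_expect_norm_coeffVec_curryMid :
    1 / √2 * ‖coeffVec A‖ ≤ 𝔼 x : Fin (n l) → ℤˣ, ‖coeffVec (A.curryMid l fun i => x i • 1)‖ := by
  have khintchine := sqrt_sum_norm_sq_le_expect_norm_signedSum 𝕂 fun i =>
    coeffVec (A.curryMid l (Pi.single i 1))
  rw [sum_norm_sq_coeffVec_curryMid_single, Real.sqrt_sq (norm_nonneg _)] at khintchine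
  refine khintchine.trans_eq (expect_congr rfl fun x _ => ?_)
  rw [curryMid_eq_sum_smul, map_sum]
  simp [signedSum]

lemma exists_unimodular_sum_norm_coeffVec_le {ι : Type*} [Fintype ι] {m : ℕ} {n : Fin m → ℕ}
    (B : ι → MultilinearMap 𝕂 (fun k => Fin (n k) → 𝕂) 𝕂) :
    ∃ z : ∀ k, Fin (n k) → 𝕂, (∀ k i, ‖z k i‖ = 1) ∧
      (1 / √2) ^ m * ∑ i, ‖coeffVec (B i)‖ ≤ ∑ i, ‖B i z‖ := by
  induction m with
  | zero =>
    refine ⟨fun k => k.elim0, fun k => k.elim0, le_of_eq ?_⟩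
    have norm_coeffVec_eq (i : ι) : ‖coeffVec (B i)‖ = ‖B i fun k => k.elim0‖ := by
      rw [EuclideanSpace.norm_eq, Fintype.sum_unique, Real.sqrt_sq (norm_nonneg _), coeffVec_apply]
      exact congrArg (fun z => ‖B i z‖) (Subsingleton.elim _ _)
    simp only [pow_zero, one_mul, norm_coeffVec_eq]
  | succ m ih =>
    obtain ⟨x, -, hx⟩ : ∃ x ∈ (univ : Finset (Fin (n 0) → ℤˣ)), 1 / √2 * ∑ i, ‖coeffVec (B i)‖ ≤
        ∑ i, ‖coeffVec ((B i).curryMid 0 fun i => x i • 1)‖ := by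
      refine exists_le_of_le_expect univ_nonempty ?_
      rw [mul_sum, expect_sum_comm]
      exact sum_le_sum fun i _ => norm_coeffVec_le_expect_norm_coeffVec_curryMid (B i) 0
    obtain ⟨z, hz, hBz⟩ := ih fun i => (B i).curryMid 0 fun i => x i • 1
    refine ⟨Fin.insertNth 0 (fun i => x i • 1) z, (Fin.forall_iff_succAbove 0).2 ⟨?_, ?_⟩, ?_⟩
    · simp [norm_units_zsmul]
    · simpa only [Fin.insertNth_apply_succAbove] using hz
    · calc (1 / √2) ^ (m + 1) * ∑ i, ‖coeffVec (B i)‖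
          = (1 / √2) ^ m * (1 / √2 * ∑ i, ‖coeffVec (B i)‖) := by rw [pow_succ, mul_assoc]
        _ ≤ (1 / √2) ^ m * ∑ i, ‖coeffVec ((B i).curryMid 0 fun i => x i • 1)‖ := by gcongr
        _ ≤ ∑ i, ‖B i (Fin.insertNth 0 (fun i => x i • 1) z)‖ := hBz

lemma exists_unimodular_sum_norm_coeffVec_curryMid_le :
    ∃ z : ∀ k, Fin (n k) → 𝕂, (∀ k i, ‖z k i‖ = 1) ∧
      (1 / √2) ^ m * ∑ i, ‖coeffVec (A.curryMid l (Pi.single i 1))‖ ≤ ‖A z‖ := by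
  obtain ⟨z, hz, hAz⟩ := exists_unimodular_sum_norm_coeffVec_le
    fun i => A.curryMid l (Pi.single i 1)
  choose c hc hcA using fun i => RCLike.exists_norm_eq_mul_self (A.curryMid l (Pi.single i 1) z)
  refine ⟨l.insertNth c z, (Fin.forall_iff_succAbove l).2 ⟨by simpa using hc, by simpa using hz⟩,
    hAz.trans_eq ?_⟩
  calc ∑ i, ‖A.curryMid l (Pi.single i 1) z‖
      = ‖∑ i, c i * A.curryMid l (Pi.single i 1) z‖ := by
        simp only [← hcA, ← RCLike.ofReal_sum]
        rw [RCLike.norm_ofReal, abs_of_nonneg (sum_nonneg fun _ _ => norm_nonneg _)]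
    _ = ‖A.curryMid l c z‖ := by
        simp only [curryMid_eq_sum_smul A l c, _root_.sum_apply, _root_.smul_apply, smul_eq_mul]

end MixedLittlewood

section OperatorNorm

open Finset

variable {𝕂 : Type*} [RCLike 𝕂]

lemma norm_le_lpNorm {n : ℕ} {p : ℝ≥0∞} (hp : p ≠ 0) (x : Fin n → 𝕂) (i : Fin n) :
    ‖x i‖ ≤ lpNorm p x := by
  unfold lpNorm
  split_ifs with hp_top
  · exact le_ciSup (f := fun j => ‖x j‖) (Set.finite_range _).bddAbove i
  · have p_pos : 0 < p.toReal := ENNReal.toReal_pos hp hp_top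
    calc ‖x i‖ = (‖x i‖ ^ p.toReal) ^ (1 / p.toReal) := by
          rw [one_div, Real.rpow_rpow_inv (norm_nonneg _) p_pos.ne']
      _ ≤ (∑ j, ‖x j‖ ^ p.toReal) ^ (1 / p.toReal) := by
          gcongr
          exact single_le_sum (f := fun j => ‖x j‖ ^ p.toReal) (fun j _ => by positivity)
            (mem_univ i)

lemma lpNorm_le_of_forall_norm_le {n : ℕ} {p : ℝ≥0∞} (hp : p ≠ 0) {c : ℝ} (hc : 0 ≤ c)
    {x : Fin n → 𝕂} (hx : ∀ i, ‖x i‖ ≤ c) : lpNorm p x ≤ (n : ℝ) ^ (1 / p).toReal * c := by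
  unfold lpNorm
  split_ifs with hp_top
  · simpa [hp_top] using Real.iSup_le hx hc
  · have p_pos : 0 < p.toReal := ENNReal.toReal_pos hp hp_top
    calc (∑ j, ‖x j‖ ^ p.toReal) ^ (1 / p.toReal)
        ≤ (∑ _j : Fin n, c ^ p.toReal) ^ (1 / p.toReal) := by
          gcongr with j
          exact hx j
      _ = (n : ℝ) ^ (1 / p).toReal * c := by
          rw [sum_const, card_univ, Fintype.card_fin, nsmul_eq_mul,
            Real.mul_rpow (by positivity) (by positivity), one_div, one_div, ENNReal.toReal_inv,
            Real.rpow_rpow_inv hc p_pos.ne']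

lemma lpNorm_rpow_smul_le_one {n : ℕ} (hn : 0 < n) {p : ℝ≥0∞} (hp : p ≠ 0) {z : Fin n → 𝕂}
    (hz : ∀ i, ‖z i‖ ≤ 1) : lpNorm p (((n : ℝ) ^ (-(1 / p).toReal) : ℝ) • z) ≤ 1 := by
  have n_pos : (0 : ℝ) < n := Nat.cast_pos.2 hn
  calc lpNorm p (((n : ℝ) ^ (-(1 / p).toReal) : ℝ) • z)
      ≤ (n : ℝ) ^ (1 / p).toReal * (n : ℝ) ^ (-(1 / p).toReal) := by
        refine lpNorm_le_of_forall_norm_le hp (by positivity) fun i => ?_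
        rw [Pi.smul_apply, norm_smul, Real.norm_of_nonneg (by positivity)]
        exact mul_le_of_le_one_right (by positivity) (hz i)
    _ = 1 := by rw [← Real.rpow_add n_pos, add_neg_cancel, Real.rpow_zero]

variable {m : ℕ} {n : Fin m → ℕ} {p : Fin m → ℝ≥0∞}
  (A : MultilinearMap 𝕂 (fun k => Fin (n k) → 𝕂) 𝕂)

lemma norm_apply_le_sum_norm_single {x : ∀ k, Fin (n k) → 𝕂} (hx : ∀ k i, ‖x k i‖ ≤ 1) :
    ‖A x‖ ≤ ∑ j : ∀ k, Fin (n k), ‖A fun k => Pi.single (j k) 1‖ := by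
  have expand : A x = ∑ j : ∀ k, Fin (n k), (∏ k, x k (j k)) • A fun k => Pi.single (j k) 1 := by
    conv_lhs => rw [funext fun k => pi_eq_sum_univ' (x k), MultilinearMap.map_sum]
    simp only [MultilinearMap.map_smul_univ]
  rw [expand]
  refine (norm_sum_le _ _).trans (sum_le_sum fun j _ => ?_)
  rw [norm_smul, norm_prod]
  exact mul_le_of_le_one_left (norm_nonneg _)
    (prod_le_one (fun _ _ => norm_nonneg _) fun k _ => hx k (j k))

lemma norm_apply_le_opNorm (hp : ∀ k, p k ≠ 0) {x : ∀ k, Fin (n k) → 𝕂}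
    (hx : ∀ k, lpNorm (p k) (x k) ≤ 1) : ‖A x‖ ≤ opNorm p A := by
  refine le_csSup ⟨∑ j : ∀ k, Fin (n k), ‖A fun k => Pi.single (j k) 1‖, ?_⟩ ⟨x, hx, rfl⟩
  rintro _ ⟨y, hy, rfl⟩
  exact norm_apply_le_sum_norm_single A fun k i => (norm_le_lpNorm (hp k) (y k) i).trans (hy k)

lemma prod_rpow_mul_norm_apply_le_opNorm (hn : ∀ k, 0 < n k) (hp : ∀ k, p k ≠ 0)
    {z : ∀ k, Fin (n k) → 𝕂} (hz : ∀ k i, ‖z k i‖ ≤ 1) :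
    (∏ k, (n k : ℝ) ^ (-(1 / p k).toReal)) * ‖A z‖ ≤ opNorm p A := by
  calc (∏ k, (n k : ℝ) ^ (-(1 / p k).toReal)) * ‖A z‖
      = ‖A fun k => ((n k : ℝ) ^ (-(1 / p k).toReal) : ℝ) • z k‖ := by
        simp only [RCLike.real_smul_eq_coe_smul (K := 𝕂), MultilinearMap.map_smul_univ, norm_smul,
          norm_prod, RCLike.norm_ofReal, abs_of_nonneg (Real.rpow_nonneg (Nat.cast_nonneg _) _)]
    _ ≤ opNorm p A :=
        norm_apply_le_opNorm A hp fun k => lpNorm_rpow_smul_le_one (hn k) (hp k) (hz k)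

end OperatorNorm

theorem unimodular_lower_bound_hardy_littlewood_general {𝕂 : Type*} [RCLike 𝕂] {m : ℕ}
    {n : Fin m → ℕ} (hn : ∀ k, 0 < n k) {p : Fin m → ℝ≥0∞} (hp : ∀ k, p k ≠ 0)
    {A : MultilinearMap 𝕂 (fun k => Fin (n k) → 𝕂) 𝕂} (hA : Unimodular A) (l : Fin m) :
    (1 / √2) ^ (m - 1) * (√(n l) * ∏ k, (n k : ℝ) ^ (1 / 2 - (1 / p k).toReal)) ≤ opNorm p A := by
  obtain _ | m := m
  · exact l.elim0
  obtain ⟨z, hz, hAz⟩ := exists_unimodular_sum_norm_coeffVec_curryMid_le A l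
  rw [sum_norm_coeffVec_curryMid_single_of_unimodular l hA] at hAz
  have rpow_half_sub (k : Fin (m + 1)) : (n k : ℝ) ^ (1 / 2 - (1 / p k).toReal) =
      (n k : ℝ) ^ (-(1 / p k).toReal) * √(n k) := by
    rw [Real.sqrt_eq_rpow, ← Real.rpow_add (Nat.cast_pos.2 (hn k)), neg_add_eq_sub]
  calc (1 / √2) ^ m * (√(n l) * ∏ k, (n k : ℝ) ^ (1 / 2 - (1 / p k).toReal))
      = (∏ k, (n k : ℝ) ^ (-(1 / p k).toReal)) *
          ((1 / √2) ^ m * (√(n l) * ∏ k, √(n k : ℝ))) := by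
        simp only [rpow_half_sub, Finset.prod_mul_distrib]
        ring
    _ ≤ (∏ k, (n k : ℝ) ^ (-(1 / p k).toReal)) * ‖A z‖ := by gcongr
    _ ≤ opNorm p A := prod_rpow_mul_norm_apply_le_opNorm A hn hp fun k i => (hz k i).le

/-- **Lower bound from the Hardy–Littlewood inequalities.** For `p_1, …, p_m ∈ [2,∞]`,
every unimodular `m`-linear form `A : ℓ_{p_1}^n × ⋯ × ℓ_{p_m}^n → 𝕂` satisfies
`‖A‖ ≥ (1/√2)^(m−1) · n ^ (1/2 + (1/2 − 1/p_1) + ⋯ + (1/2 − 1/p_m))`. -/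
theorem unimodular_lower_bound_hardy_littlewood {𝕂 : Type*} [RCLike 𝕂]
    (m n : ℕ) (hm : 0 < m) (hn : 0 < n)
    (p : Fin m → ℝ≥0∞) (hp : ∀ k, 2 ≤ p k)
    (A : MultilinearMap 𝕂 (fun _ : Fin m => Fin n → 𝕂) 𝕂)
    (hA : Unimodular (n := fun _ => n) A) :
    (1 / Real.sqrt 2) ^ (m - 1) *
        (n : ℝ) ^ ((1 : ℝ) / 2 + ∑ k, ((1 : ℝ) / 2 - (1 / p k).toReal)) ≤
      opNorm p A := by
  simpa only [Real.rpow_add (Nat.cast_pos.2 hn), Real.rpow_sum_of_pos (Nat.cast_pos.2 hn),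
    Real.sqrt_eq_rpow] using unimodular_lower_bound_hardy_littlewood_general (fun _ => hn)
      (fun k => (two_pos.trans_le (hp k)).ne') hA ⟨0, hm⟩
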